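/- arXiv:1004.3829 — 2 statements merged into one kernel-verified Lean document; each statement's English description precedes it below -/
import Mathlib

section
/- Let F be a field of characteristic 0 and R = F[x,y,z]/(f) a 2-dimensional isolated hypersurface singularity. Then Ext¹_R(Ω¹_{R/F}, R) ≅ Ω³_{R/F} ≅ R/(∂f/∂x, ∂f/∂y, ∂f/∂z); in particular Ext¹_R(Ω¹_{R/F}, R) has finite length equal to the Tjurina number τ. -/
open MvPolynomial CategoryTheory Opposite

/-- The length of a module, defined as the Krull dimension of its submodule lattice. -/
noncomputable def moduleLength (R M : Type) [CommRing R] [AddCommGroup M] [Module R M] :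
    WithBot ℕ∞ :=
  Order.krullDim (Submodule R M)

/-!
A presentation of `S` as `F[x₁, …, xₙ]/(f)` gives the Jacobian presentation `S → Sⁿ → Ω → 0` of the
Kähler differentials, whose first map sends `1` to the gradient `∇f`. For squarefree `f` in
characteristic zero this map is injective: if `f ∣ r * ∂ᵢf` for all `i`, then every prime factor `p`
of `f` divides `r`, as `p` divides neither its cofactor in `f` nor, for degree reasons, all its
partial derivatives. So `0 → S → Sⁿ → Ω → 0` is a projective resolution, and dualizing it gives
`Ext¹(Ω, S) ≃ S/(∂₁f, …, ∂ₙf)`. On the other hand, the top exterior power of a module with `n`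
generators is cyclic, and its annihilator is the ideal of all coordinates of relations between the
generators; here the relations are the multiples of `∇f`.
-/

lemma dvd_of_forall_prime_dvd_of_squarefree {α : Type*} [CommMonoidWithZero α] [Nontrivial α]
    [UniqueFactorizationMonoid α] {a b : α} (ha : Squarefree a)
    (h : ∀ p, Prime p → p ∣ a → p ∣ b) : a ∣ b := by
  induction a using UniqueFactorizationMonoid.induction_on_prime with
  | h₁ => exact absurd rfl ha.ne_zero
  | h₂ u hu => exact hu.dvd
  | h₃ a p _ hp ih =>
    obtain ⟨c, rfl⟩ := ih ha.of_mul_right fun q hq hqa => h q hq (hqa.mul_left p)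
    have hpa : ¬ p ∣ a := fun hpa => hp.not_isUnit (ha p (mul_dvd_mul_left p hpa))
    rw [mul_comm p a]
    exact mul_dvd_mul_left a ((hp.dvd_or_dvd (h p hp (dvd_mul_right p a))).resolve_left hpa)

section PartialDerivatives

variable {σ A : Type*}

lemma eq_C_coeff_zero_of_pderiv_eq_zero [CommSemiring A] [NoZeroDivisors A] [CharZero A]
    {p : MvPolynomial σ A} (h : ∀ i, pderiv i p = 0) : p = C (coeff 0 p) := by
  rw [← totalDegree_eq_zero_iff_eq_C, totalDegree_eq_zero_iff]
  intro m hm i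
  by_contra hi
  have hle : Finsupp.single i 1 ≤ m := by simpa [Nat.one_le_iff_ne_zero] using hi
  have hcoeff := coeff_pderiv (i := i) p (m - Finsupp.single i 1)
  rw [h i, coeff_zero, tsub_add_cancel_of_le hle, eq_comm] at hcoeff
  exact mul_ne_zero (mem_support_iff.1 hm) (Nat.cast_add_one_ne_zero _) hcoeff

lemma degreeOf_pderiv_lt [CommSemiring A] {p : MvPolynomial σ A} {i : σ} (h : pderiv i p ≠ 0) :
    degreeOf i (pderiv i p) < degreeOf i p := by
  have hlt {m : σ →₀ ℕ} (hm : m ∈ (pderiv i p).support) : m i < degreeOf i p := by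
    rw [mem_support_iff, coeff_pderiv] at hm
    have := monomial_le_degreeOf i (mem_support_iff.2 (left_ne_zero_of_mul hm))
    rwa [Finsupp.add_apply, Finsupp.single_eq_same] at this
  obtain ⟨m, hm⟩ := support_nonempty.2 h
  exact (degreeOf_lt_iff ((Nat.zero_le _).trans_lt (hlt hm))).2 fun _ => hlt

lemma pderiv_eq_zero_of_dvd_pderiv [CommSemiring A] [NoZeroDivisors A] {p : MvPolynomial σ A}
    {i : σ} (h : p ∣ pderiv i p) : pderiv i p = 0 := by
  by_contra h0
  obtain ⟨q, hq⟩ := h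
  obtain ⟨hp0, hq0⟩ := mul_ne_zero_iff.1 (hq ▸ h0)
  have hlt := degreeOf_pderiv_lt h0
  rw [hq, degreeOf_mul_eq hp0 hq0] at hlt
  exact (Nat.le_add_right _ _).not_gt hlt

variable [Field A] [CharZero A]

lemma exists_not_dvd_pderiv_of_prime {p : MvPolynomial σ A} (hp : Prime p) :
    ∃ i, ¬ p ∣ pderiv i p := by
  by_contra! h
  have hC := eq_C_coeff_zero_of_pderiv_eq_zero fun i => pderiv_eq_zero_of_dvd_pderiv (h i)
  have h0 : coeff 0 p ≠ 0 := fun h0 => hp.ne_zero (by rw [hC, h0, C_0])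
  exact hp.not_isUnit (hC ▸ (IsUnit.mk0 _ h0).map C)

lemma dvd_of_forall_dvd_mul_pderiv {f r : MvPolynomial σ A} (hf : Squarefree f)
    (h : ∀ i, f ∣ r * pderiv i f) : f ∣ r := by
  refine dvd_of_forall_prime_dvd_of_squarefree hf fun p hp ⟨g, hg⟩ => ?_
  obtain ⟨i, hi⟩ := exists_not_dvd_pderiv_of_prime hp
  have hpg : ¬ p ∣ g := fun ⟨c, hc⟩ =>
    hp.not_isUnit (hf p ⟨c, by rw [hg, hc, mul_assoc]⟩)
  have hmul : p ∣ r * g * pderiv i p := by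
    have hsum : r * pderiv i f = p * (r * pderiv i g) + r * g * pderiv i p := by
      rw [hg, Derivation.leibniz, smul_eq_mul, smul_eq_mul]
      ring
    refine (dvd_add_right (dvd_mul_right p _)).1 (hsum ▸ (Dvd.intro g hg.symm).trans (h i))
  exact (hp.dvd_or_dvd ((hp.dvd_or_dvd hmul).resolve_right hi)).resolve_right hpg

end PartialDerivatives

section JacobianPresentation

open KaehlerDifferential

variable {A S ι κ : Type*} [CommRing A] [CommRing S] [Algebra A S]
  (P : Algebra.Presentation A S ι κ)

/-- The image in `S` of the gradient of the relation `r` of a presentation of `S`: the column of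
the Jacobian matrix of the presentation that belongs to `r`. -/
noncomputable def relationGradient (r : κ) : ι → S :=
  fun i => aeval P.val (pderiv i (P.relation r))

lemma span_range_D_val_eq_top :
    Submodule.span S (Set.range fun i => D A S (P.val i)) = ⊤ :=
  ((Module.Relations.Solution.isPresentation_iff _).1 P.differentialsSolution_isPresentation).1

lemma ker_finsuppLinearCombination_D_val [Finite ι] :
    LinearMap.ker (Finsupp.linearCombination S fun i => D A S (P.val i)) =
      Submodule.span S (Set.range fun r =>
        (Finsupp.linearEquivFunOnFinite S S ι).symm (relationGradient P r)) := by
  have hrel (r : κ) : (Finsupp.linearEquivFunOnFinite S S ι).symm (relationGradient P r) =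
      Finsupp.mapRange (algebraMap P.Ring S) (map_zero _)
        ((mvPolynomialBasis A ι).repr (D A _ (P.relation r))) := by
    ext i
    rw [Finsupp.mapRange_apply, mvPolynomialBasis_repr_apply, P.algebraMap_apply]
    rfl
  simp only [hrel]
  exact P.differentialsSolution_isPresentation.ker_π

lemma ker_linearCombination_D_val [Fintype ι] :
    LinearMap.ker (Fintype.linearCombination S fun i => D A S (P.val i)) =
      Submodule.span S (Set.range (relationGradient P)) := by
  rw [← Finsupp.linearCombination_eq_fintype_linearCombination, LinearMap.ker_comp,
    ker_finsuppLinearCombination_D_val, Submodule.comap_equiv_eq_map_symm, Submodule.map_span,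
    ← Set.range_comp]
  rfl

lemma exact_toSpanSingleton_relationGradient [Fintype ι] [Unique κ] :
    Function.Exact (LinearMap.toSpanSingleton S (ι → S) (relationGradient P default))
      (Fintype.linearCombination S fun i => D A S (P.val i)) := by
  rw [LinearMap.exact_iff, ker_linearCombination_D_val, Set.range_unique,
    LinearMap.range_toSpanSingleton]

lemma injective_toSpanSingleton_relationGradient {F : Type*} [Field F] [CharZero F] [Algebra F S]
    [Unique κ] (P : Algebra.Presentation F S ι κ) (h : Squarefree (P.relation default)) :
    Function.Injective (LinearMap.toSpanSingleton S (ι → S) (relationGradient P default)) := by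
  have hdvd (p : MvPolynomial ι F) : aeval P.val p = 0 ↔ P.relation default ∣ p := by
    rw [← Ideal.mem_span_singleton, ← RingHom.mem_ker, ← Set.range_unique,
      P.span_range_relation_eq_ker, P.ker_eq_ker_aeval_val]
  rw [injective_iff_map_eq_zero]
  intro r hr
  obtain ⟨q, rfl⟩ := P.aeval_val_surjective r
  refine (hdvd q).2 (dvd_of_forall_dvd_mul_pderiv h fun i => (hdvd _).1 ?_)
  rw [map_mul]
  exact congrFun hr i

end JacobianPresentation

section ExteriorPower

variable {R M ι : Type*} [CommRing R] [AddCommGroup M] [Module R M]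

/-- The ideal generated by all coordinates of all vectors of `N`. If `N` is the relation module of
`n` generators of a module, this is the Fitting ideal `Fitt_{n-1}` of that module. -/
def coordinateIdeal (N : Submodule R (ι → R)) : Ideal R :=
  ⨆ i, N.map (LinearMap.proj i)

lemma apply_mem_coordinateIdeal {N : Submodule R (ι → R)} {c : ι → R} (hc : c ∈ N) (i : ι) :
    c i ∈ coordinateIdeal N :=
  Submodule.mem_iSup_of_mem i ⟨c, hc, rfl⟩

lemma coordinateIdeal_span_singleton (g : ι → R) :
    coordinateIdeal (Submodule.span R {g}) = Ideal.span (Set.range g) := by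
  simp [coordinateIdeal, Submodule.map_span, Ideal.span, Submodule.span_range_eq_iSup]

variable (R) in
/-- The relation module (first syzygy module) of a finite family of vectors. -/
noncomputable abbrev relationModule [Fintype ι] (v : ι → M) : Submodule R (ι → R) :=
  LinearMap.ker (Fintype.linearCombination R v)

lemma smul_map_eq_zero_of_mem_relationModule {N : Type*} [AddCommGroup N] [Module R N] [Fintype ι]
    (a : M [⋀^ι]→ₗ[R] N) {v : ι → M} {c : ι → R} (hc : c ∈ relationModule R v) (j : ι) :
    c j • a v = 0 := by
  classical
  calc c j • a v = ∑ i, c i • a (Function.update v j (v i)) := by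
        rw [Finset.sum_eq_single j, Function.update_eq_self]
        · intro i _ hij
          rw [a.map_update_self _ hij.symm, smul_zero]
        · simp
    _ = a (Function.update v j (∑ i, c i • v i)) := by
        simp only [a.map_update_sum, a.map_update_smul]
    _ = 0 := a.map_coord_zero j (by rw [Function.update_self]; exact hc)

lemma exists_linearMap_apply_eq_single_one [Fintype ι] [DecidableEq ι] {v : ι → M}
    (hv : Submodule.span R (Set.range v) = ⊤) :
    ∃ π : M →ₗ[R] ι → R ⧸ coordinateIdeal (relationModule R v), ∀ i, π (v i) = Pi.single i 1 := by
  let I := coordinateIdeal (relationModule R v)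
  have hle : relationModule R v ≤ LinearMap.ker (I.mkQ.compLeft ι) := fun c hc =>
    funext fun i => (Submodule.Quotient.mk_eq_zero I).2 (apply_mem_coordinateIdeal hc i)
  have hsurj := (span_range_eq_top_iff_surjective_fintypeLinearCombination R v).1 hv
  refine ⟨(relationModule R v).liftQ _ hle ∘ₗ
    ((Fintype.linearCombination R v).quotKerEquivOfSurjective hsurj).symm, fun i => ?_⟩
  have hvi : v i = Fintype.linearCombination R v (Pi.single i 1) := by simp
  rw [hvi, LinearMap.comp_apply, LinearEquiv.coe_coe, LinearMap.quotKerEquivOfSurjective_symm_apply]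
  funext j
  by_cases hji : j = i <;> simp [hji]

lemma exists_alternatingMap_apply_eq_one [Fintype ι] {v : ι → M}
    (hv : Submodule.span R (Set.range v) = ⊤) :
    ∃ a : M [⋀^ι]→ₗ[R] (R ⧸ coordinateIdeal (relationModule R v)), a v = 1 := by
  classical
  obtain ⟨π, hπ⟩ := exists_linearMap_apply_eq_single_one hv
  let I := coordinateIdeal (relationModule R v)
  let det : (ι → R ⧸ I) [⋀^ι]→ₗ[R] (R ⧸ I) :=
    { Matrix.detRowAlternating.toMultilinearMap.restrictScalars R with
      map_eq_zero_of_eq' := Matrix.detRowAlternating.map_eq_zero_of_eq' }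
  refine ⟨det.compLinearMap π, ?_⟩
  have hone : (fun i => π (v i)) = (1 : Matrix ι ι (R ⧸ I)) := by
    funext i
    exact (hπ i).trans (funext fun j => Matrix.one_eq_pi_single.symm)
  exact (congrArg Matrix.det hone).trans Matrix.det_one

variable {n : ℕ} {v : Fin n → M}

lemma span_ιMulti_eq_top (hv : Submodule.span R (Set.range v) = ⊤) :
    Submodule.span R {exteriorPower.ιMulti R n v} = ⊤ := by
  rw [← top_le_iff, ← exteriorPower.ιMulti_family_span_of_span R hv, Submodule.span_le]
  rintro _ ⟨s, rfl⟩
  have hid : ⇑(Set.powersetCard.ofFinEmbEquiv.symm s) = id := by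
    let g := Set.powersetCard.ofFinEmbEquiv.symm s
    rw [← StrictMono.range_inj g.strictMono strictMono_id, Set.range_id]
    exact (Finite.surjective_of_injective g.injective).range_eq
  rw [exteriorPower.ιMulti_family, hid]
  exact Submodule.mem_span_singleton_self _

lemma torsionOf_ιMulti (hv : Submodule.span R (Set.range v) = ⊤) :
    Ideal.torsionOf R (⋀[R]^n M) (exteriorPower.ιMulti R n v) =
      coordinateIdeal (relationModule R v) := by
  refine le_antisymm (fun r hr => ?_) (iSup_le fun i => ?_)
  · obtain ⟨a, ha⟩ := exists_alternatingMap_apply_eq_one hv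
    rw [Ideal.mem_torsionOf_iff] at hr
    have h := congrArg (exteriorPower.alternatingMapLinearEquiv a) hr
    rw [map_smul, map_zero, exteriorPower.alternatingMapLinearEquiv_apply_ιMulti, ha,
      Algebra.smul_def, mul_one] at h
    exact Ideal.Quotient.eq_zero_iff_mem.1 h
  · rw [Submodule.map_le_iff_le_comap]
    exact fun c hc => smul_map_eq_zero_of_mem_relationModule _ hc i

/-- The top exterior power of a module with `n` generators is `R` modulo the ideal of coordinates of
their relations, with `v 0 ∧ ⋯ ∧ v (n - 1)` corresponding to `1`. -/
noncomputable def exteriorPowerEquivQuotient (hv : Submodule.span R (Set.range v) = ⊤) :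
    (⋀[R]^n M) ≃ₗ[R] R ⧸ coordinateIdeal (relationModule R v) :=
  Submodule.topEquiv.symm ≪≫ₗ LinearEquiv.ofEq _ _ (span_ιMulti_eq_top hv).symm ≪≫ₗ
    (Ideal.quotTorsionOfEquivSpanSingleton R _ _).symm ≪≫ₗ
    Submodule.quotEquivOfEq _ _ (torsionOf_ιMulti hv)

end ExteriorPower

universe w u v

section ProjectiveResolution

open Limits ZeroObject

variable {C : Type*} [Category* C] [Abelian C] (S : ShortComplex C)

/-- The complex `⋯ ⟶ 0 ⟶ S.X₁ ⟶ S.X₂` in degrees `1` and `0`, forgetting `S.X₃`. -/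
noncomputable def twoTermComplex : ChainComplex C ℕ where
  X | 0 => S.X₂ | 1 => S.X₁ | _ + 2 => 0
  d | 1, 0 => S.f | _, _ => 0
  shape i j h := by
    match i, j, h with
    | 1, 0, h => exact absurd rfl h
    | 0, _, _ | _ + 2, _, _ | 1, _ + 1, _ => rfl
  d_comp_d' i j k _ _ := by
    match i, j, k with
    | 1, 0, _ => exact comp_zero
    | 0, _, _ | _ + 2, _, _ | 1, _ + 1, _ => exact zero_comp

/-- The augmentation to `S.X₃` of the two-term complex, given by `S.g` in degree zero. -/
noncomputable def twoTermComplexπ :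
    twoTermComplex S ⟶ (ChainComplex.single₀ C).obj S.X₃ :=
  (ChainComplex.toSingle₀Equiv _ _).symm ⟨S.g, S.zero⟩

lemma twoTermComplexπ_f_zero : (twoTermComplexπ S).f 0 = S.g :=
  ChainComplex.toSingle₀Equiv_symm_apply_f_zero ..

variable {S}

lemma quasiIso_twoTermComplexπ (hS : S.ShortExact) : QuasiIso (twoTermComplexπ S) where
  quasiIsoAt
    | 0 => by
      rw [ChainComplex.quasiIsoAt₀_iff, ShortComplex.quasiIso_iff_of_zeros' _ rfl rfl rfl]
      refine (ShortComplex.exact_and_epi_g_iff_of_iso (S₂ := S) ?_).2 ⟨hS.exact, hS.epi_g⟩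
      refine ShortComplex.isoMk (Iso.refl _) (Iso.refl _) (Iso.refl _) ?_ ?_
      · exact (Category.id_comp S.f).trans (Category.comp_id S.f).symm
      · exact (Category.id_comp S.g).trans
          ((twoTermComplexπ_f_zero S).symm.trans (Category.comp_id ((twoTermComplexπ S).f 0)).symm)
    | 1 => by
      rw [quasiIsoAt_iff_exactAt' _ _ (ChainComplex.exactAt_succ_single_obj _ _),
        HomologicalComplex.exactAt_iff' _ 2 1 0 (by simp) (by simp),
        ShortComplex.exact_iff_mono _ rfl]
      exact hS.mono_f
    | n + 2 => by
      rw [quasiIsoAt_iff_exactAt' _ _ (ChainComplex.exactAt_succ_single_obj _ _)]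
      exact ShortComplex.exact_of_isZero_X₂ _ (isZero_zero C)

/-- The length-one projective resolution given by a short exact sequence with projective first and
second terms. -/
noncomputable def projectiveResolutionOfShortExact (hS : S.ShortExact)
    [Projective S.X₁] [Projective S.X₂] : ProjectiveResolution S.X₃ where
  complex := twoTermComplex S
  projective
    | 0 => inferInstanceAs (Projective S.X₂)
    | 1 => inferInstanceAs (Projective S.X₁)
    | _ + 2 => (isZero_zero C).projective
  π := twoTermComplexπ S
  quasiIso := quasiIso_twoTermComplexπ hS

end ProjectiveResolution

section Ext

open Limits

variable {R : Type w} [Ring R] {C : Type u} [Category.{v} C] [Abelian C] [Linear R C]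
  [EnoughProjectives C] {S : ShortComplex C}

/-- `Ext¹` computed from a length-one projective resolution: the maps `S.X₁ ⟶ Y` modulo those that
factor through `S.f`. -/
noncomputable def extOneEquivQuotient (hS : S.ShortExact) [Projective S.X₁] [Projective S.X₂]
    (Y : C) : ((Ext R C 1).obj (op S.X₃)).obj Y ≃ₗ[R]
      (S.X₁ ⟶ Y) ⧸ LinearMap.range (Linear.leftComp R Y S.f) :=
  let P := projectiveResolutionOfShortExact hS
  let T : ShortComplex (ModuleCat.{v} R) := (P.complex.linearYonedaObj R Y).sc' 0 1 2
  have hT : T.g = 0 := by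
    ext (h : S.X₁ ⟶ Y)
    exact zero_comp
  (P.isoExt 1 Y ≪≫ HomologicalComplex.homologyIsoSc' _ 0 1 2 (by simp) (by simp) ≪≫
    (ShortComplex.LeftHomologyData.ofIsColimitCokernelCofork T hT _
      (ModuleCat.cokernelIsColimit T.f)).homologyIso).toLinearEquiv

end Ext

section CyclicSyzygy

variable {R P M : Type u} [CommRing R] [AddCommGroup P] [Module R P] [Module.Projective R P]
  [AddCommGroup M] [Module R M] {π : P →ₗ[R] M} {g : P}

/-- `Ext¹` of a module `M = P / (g)`, where `P` is projective and `g` has no torsion: the values at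
`1` of the maps `R → N`, modulo the values at `g` of the maps `P → N`. -/
noncomputable def extOneEquivQuotientRange
    (hg : Function.Injective (LinearMap.toSpanSingleton R P g))
    (hexact : Function.Exact (LinearMap.toSpanSingleton R P g) π) (hπ : Function.Surjective π)
    (N : Type u) [AddCommGroup N] [Module R N] :
    ((Ext R (ModuleCat R) 1).obj (op (.of R M))).obj (.of R N) ≃ₗ[R]
      N ⧸ LinearMap.range (LinearMap.applyₗ g : (P →ₗ[R] N) →ₗ[R] N) :=
  let S := ModuleCat.shortComplexOfCompEqZero _ π hexact.linearMap_comp_eq_zero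
  have : Projective S.X₁ := (IsProjective.iff_projective (R := R) R).1 inferInstance
  have : Projective S.X₂ := (IsProjective.iff_projective (R := R) P).1 inferInstance
  let e : (S.X₁ ⟶ .of R N) ≃ₗ[R] N :=
    ModuleCat.homLinearEquiv ≪≫ₗ LinearMap.ringLmapEquivSelf R R N
  have hrange : (LinearMap.range (Linear.leftComp R (.of R N) S.f)).map (e : _ →ₗ[R] N) =
      LinearMap.range (LinearMap.applyₗ g) := by
    have h (l : S.X₂ ⟶ .of R N) : e (S.f ≫ l) = l.hom g :=
      congrArg l.hom (LinearMap.toSpanSingleton_apply_one R P g)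
    rw [← LinearMap.range_comp]
    ext x
    exact ⟨fun ⟨l, hl⟩ => ⟨l.hom, (h l).symm.trans hl⟩,
      fun ⟨l, hl⟩ => ⟨ModuleCat.ofHom l, (h _).trans hl⟩⟩
  extOneEquivQuotient (ModuleCat.shortComplex_shortExact S hexact hg hπ) _ ≪≫ₗ
    Submodule.Quotient.equiv _ _ e hrange

lemma range_applyₗ_eq_span_range {ι R : Type*} [CommRing R] [Finite ι] (g : ι → R) :
    LinearMap.range (LinearMap.applyₗ g : ((ι → R) →ₗ[R] R) →ₗ[R] R) =
      Ideal.span (Set.range g) := by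
  refine le_antisymm ?_ (Ideal.span_le.2 ?_)
  · cases nonempty_fintype ι
    classical
    rintro _ ⟨l, rfl⟩
    rw [LinearMap.applyₗ_apply_apply, LinearMap.pi_apply_eq_sum_univ l g]
    refine Submodule.sum_mem _ fun i _ => ?_
    exact Ideal.mul_mem_right _ _ (Ideal.subset_span ⟨i, rfl⟩)
  · rintro _ ⟨i, rfl⟩
    exact ⟨LinearMap.proj i, rfl⟩

end CyclicSyzygy

section Hypersurface

open KaehlerDifferential

variable {κ : Type*} [Unique κ]

/-- The top differential forms of a hypersurface, as the quotient by its Jacobian ideal. -/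
noncomputable def exteriorPowerKaehlerEquivQuotient {A S : Type*} [CommRing A] [CommRing S]
    [Algebra A S] {n : ℕ} (P : Algebra.Presentation A S (Fin n) κ) :
    (⋀[S]^n Ω[S⁄A]) ≃ₗ[S] S ⧸ Ideal.span (Set.range (relationGradient P default)) :=
  exteriorPowerEquivQuotient (span_range_D_val_eq_top P) ≪≫ₗ
    Submodule.quotEquivOfEq _ _ (by
      rw [relationModule, ker_linearCombination_D_val, Set.range_unique,
        coordinateIdeal_span_singleton])

/-- `Ext¹` of the differentials of a reduced hypersurface, as the quotient by its Jacobian ideal. -/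
noncomputable def extOneKaehlerEquivQuotient {F : Type*} {S : Type u} [Field F] [CharZero F]
    [CommRing S] [Algebra F S] {n : ℕ} (P : Algebra.Presentation F S (Fin n) κ)
    (h : Squarefree (P.relation default)) :
    ((Ext S (ModuleCat S) 1).obj (op (.of S Ω[S⁄F]))).obj (.of S S) ≃ₗ[S]
      S ⧸ Ideal.span (Set.range (relationGradient P default)) :=
  extOneEquivQuotientRange (injective_toSpanSingleton_relationGradient P h)
      (exact_toSpanSingleton_relationGradient P)
      ((span_range_eq_top_iff_surjective_fintypeLinearCombination S _).1
        (span_range_D_val_eq_top P)) S ≪≫ₗ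
    Submodule.quotEquivOfEq _ _ (range_applyₗ_eq_span_range _)

theorem ext1_omega1_iso_omega3_general {F : Type*} {S : Type u} [Field F] [CharZero F]
    [CommRing S] [Algebra F S] {n : ℕ} (P : Algebra.Presentation F S (Fin n) κ)
    (h : Squarefree (P.relation default)) :
    Nonempty (((Ext S (ModuleCat S) 1).obj (op (.of S Ω[S⁄F]))).obj (.of S S) ≃ₗ[S]
      ⋀[S]^n Ω[S⁄F]) ∧
    Nonempty ((⋀[S]^n Ω[S⁄F]) ≃ₗ[S] S ⧸ Ideal.span (Set.range (relationGradient P default))) :=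
  ⟨⟨extOneKaehlerEquivQuotient P h ≪≫ₗ (exteriorPowerKaehlerEquivQuotient P).symm⟩,
    ⟨exteriorPowerKaehlerEquivQuotient P⟩⟩

end Hypersurface

section HypersurfacePresentation

variable {ι A S : Type*} [CommRing A] [CommRing S] [Algebra A S] {f : MvPolynomial ι A}

/-- The presentation of a hypersurface algebra by the single relation `f`. -/
noncomputable def hypersurfacePresentation
    (e : (MvPolynomial ι A ⧸ Ideal.span {f}) ≃ₐ[A] S) : Algebra.Presentation A S ι Unit where
  __ := (Algebra.Generators.naive (I := Ideal.span {f})).ofAlgEquiv e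
  relation _ := f
  span_range_relation_eq_ker := by
    rw [Algebra.Generators.ker_ofAlgEquiv, Algebra.Generators.ker_naive, Set.range_const]

lemma relationGradient_hypersurfacePresentation
    (e : (MvPolynomial ι A ⧸ Ideal.span {f}) ≃ₐ[A] S) (r : Unit) (i : ι) :
    relationGradient (hypersurfacePresentation e) r i = e (Ideal.Quotient.mk _ (pderiv i f)) := by
  have haeval : aeval (hypersurfacePresentation e).val =
      e.toAlgHom.comp (Ideal.Quotient.mkₐ A (Ideal.span {f})) :=
    algHom_ext fun i => aeval_X _ i
  exact DFunLike.congr_fun haeval _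

end HypersurfacePresentation

/-- Let `R = F[x,y,z]/(f)` be a 2-dimensional isolated hypersurface singularity over a
field `F` of characteristic zero (`f` prime, and the Tjurina algebra `R ⧸ J` of the
Jacobian ideal `J` has finite length).  Then
`Ext¹_R(Ω¹_{R/F}, R) ≅ Ω³_{R/F} ≅ R/(∂f/∂x, ∂f/∂y, ∂f/∂z)`; in particular
`Ext¹_R(Ω¹_{R/F}, R)` has finite length, equal to the Tjurina number
`τ = length_R R/(∂f/∂x, ∂f/∂y, ∂f/∂z)`. -/
theorem ext1_omega1_iso_omega3 (F : Type) [Field F] [CharZero F]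
    (f : MvPolynomial (Fin 3) F) (hf : Prime f)
    (R : Type) [CommRing R] (e : (MvPolynomial (Fin 3) F ⧸ Ideal.span {f}) ≃+* R)
    [Algebra F R] (halg : ∀ c : F, algebraMap F R c = e (algebraMap F _ c))
    (J : Ideal R)
    (hJ : J = Ideal.span {e (Ideal.Quotient.mk _ (pderiv 0 f)),
      e (Ideal.Quotient.mk _ (pderiv 1 f)), e (Ideal.Quotient.mk _ (pderiv 2 f))})
    (hisolated : IsFiniteLength R (R ⧸ J)) :
    Nonempty
      ((((Ext R (ModuleCat R) 1).obj (op (ModuleCat.of R (Ω[R⁄F])))).obj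
          (ModuleCat.of R R)) ≃ₗ[R] (⋀[R]^3 (Ω[R⁄F]))) ∧
    Nonempty ((⋀[R]^3 (Ω[R⁄F]) : Submodule R _) ≃ₗ[R] (R ⧸ J)) ∧
    IsFiniteLength R (((Ext R (ModuleCat R) 1).obj (op (ModuleCat.of R (Ω[R⁄F])))).obj
          (ModuleCat.of R R)) ∧
    moduleLength R (((Ext R (ModuleCat R) 1).obj (op (ModuleCat.of R (Ω[R⁄F])))).obj
          (ModuleCat.of R R)) = moduleLength R (R ⧸ J) := by
  let e' : (MvPolynomial (Fin 3) F ⧸ Ideal.span {f}) ≃ₐ[F] R :=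
    AlgEquiv.ofRingEquiv (f := e) fun c => (halg c).symm
  obtain ⟨⟨E⟩, ⟨E'⟩⟩ :=
    ext1_omega1_iso_omega3_general (hypersurfacePresentation e') hf.irreducible.squarefree
  have hspan : Ideal.span (Set.range (relationGradient (hypersurfacePresentation e') default)) =
      J := by
    rw [hJ]
    congr 1
    ext r
    simp [relationGradient_hypersurfacePresentation, Fin.exists_fin_succ, eq_comm, e']
  rw [hspan] at E'
  exact ⟨⟨E⟩, ⟨E'⟩, (E.trans E').symm.isFiniteLength hisolated,
    Order.krullDim_eq_of_orderIso (Submodule.orderIsoMapComap (E.trans E'))⟩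
end

section
/- Let F be a field of characteristic 0 and R = F[x,y,z]/(f) a 2-dimensional isolated hypersurface singularity. Then the R-modules R and Ω¹_{R/F} are torsion-free. -/
open MvPolynomial

/-! Over a hypersurface `R = F[σ] / (f)`, the module `Ω[R⁄F]` is a free module modulo the single
vector `df`, whose coordinates generate the Jacobian ideal `J` of `R`. If `r` is regular and `r • w`
is a multiple `s • df`, then `r` divides `s * J`; once `J` has grade at least two this forces
`r ∣ s`, hence `w` is a multiple of `df`.

The grade of `J` is large because `J` has finite colength: its preimage in `F[σ]` then contains a
monic polynomial in each variable, and these form a weakly regular sequence of length `card σ`. By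
Rees's description of grade through `Ext` and the long exact sequence of multiplication by `f`,
passing to `F[σ] / (f)` costs at most one. -/

open scoped Polynomial TensorProduct

section Grade

open CategoryTheory Abelian RingTheory.Sequence
open scoped Pointwise

universe u v

/-- `HasGradeGE I M n` says that the grade of `I` on `M` is at least `n`: some weakly `M`-regular
sequence of length `n` lies in `I`. Weak regularity, rather than regularity, makes the grade
infinite when `I • M = M`, as is customary. -/
def HasGradeGE {A : Type*} [CommRing A] (I : Ideal A) (M : Type*) [AddCommGroup M] [Module A M]
    (n : ℕ) : Prop :=
  ∃ rs : List A, rs.length = n ∧ (∀ r ∈ rs, r ∈ I) ∧ IsWeaklyRegular M rs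

variable {A : Type u} [CommRing A] {I : Ideal A} {M : Type v} [AddCommGroup M] [Module A M]
  {m n : ℕ}

lemma HasGradeGE.of_le (h : HasGradeGE I M n) (hmn : m ≤ n) : HasGradeGE I M m := by
  obtain ⟨rs, rfl, hI, hrs⟩ := h
  refine ⟨rs.take m, List.length_take_of_le hmn, fun r hr ↦ hI r (List.mem_of_mem_take hr), ?_⟩
  rw [← List.take_append_drop m rs, isWeaklyRegular_append_iff] at hrs
  exact hrs.1

lemma HasGradeGE.congr {N : Type*} [AddCommGroup N] [Module A N] (e : M ≃ₗ[A] N)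
    (h : HasGradeGE I M n) : HasGradeGE I N n := by
  obtain ⟨rs, hlen, hI, hrs⟩ := h
  exact ⟨rs, hlen, hI, (e.isWeaklyRegular_congr rs).mp hrs⟩

lemma HasGradeGE.map_algebraMap {B : Type*} [CommRing B] [Algebra A B] [Module B M]
    [IsScalarTower A B M] (h : HasGradeGE I M n) :
    HasGradeGE (I.map (algebraMap A B)) M n := by
  obtain ⟨rs, hlen, hI, hrs⟩ := h
  refine ⟨rs.map (algebraMap A B), by simpa using hlen, ?_,
    (isWeaklyRegular_map_algebraMap_iff B M rs).mpr hrs⟩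
  simpa using fun r hr ↦ Ideal.mem_map_of_mem _ (hI r hr)

lemma isWeaklyRegular_replicate_of_smul_eq_self {y : A} (hy : ∀ x : M, y • x = x) (n : ℕ) :
    IsWeaklyRegular M (List.replicate n y) := by
  refine ⟨fun i hi ↦ ?_⟩
  rw [List.getElem_replicate, isSMulRegular_quotient_iff_mem_of_smul_mem]
  intro x hx
  rwa [hy] at hx

/-- By Nakayama's lemma, some element of `I` acts on `M` as the identity. -/
lemma hasGradeGE_of_smul_top_eq_top [Module.Finite A M] (h : I • (⊤ : Submodule A M) = ⊤) (n : ℕ) :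
    HasGradeGE I M n := by
  obtain ⟨y, hyI, hy⟩ := Submodule.exists_mem_and_smul_eq_self_of_fg_of_le_smul I
    (⊤ : Submodule A M) Module.Finite.fg_top h.ge
  exact ⟨List.replicate n y, List.length_replicate, fun r hr ↦ List.eq_of_mem_replicate hr ▸ hyI,
    isWeaklyRegular_replicate_of_smul_eq_self (fun x ↦ hy x trivial) n⟩

lemma isRegular_iff_isWeaklyRegular_of_mem (h : I • (⊤ : Submodule A M) ≠ ⊤) {rs : List A}
    (hI : ∀ r ∈ rs, r ∈ I) : RingTheory.Sequence.IsRegular M rs ↔ IsWeaklyRegular M rs := by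
  refine ⟨fun hrs ↦ hrs.toIsWeaklyRegular, fun hrs ↦ ⟨hrs, fun htop ↦ h ?_⟩⟩
  exact eq_top_iff.mpr (htop.le.trans (Submodule.smul_mono_left (Ideal.span_le.mpr hI)))

lemma hasGradeGE_iff_subsingleton_ext [Small.{v} A] [IsNoetherianRing A] {L N : ModuleCat.{v} A}
    [Module.Finite A L] [Module.Finite A N] (hL : I • (⊤ : Submodule A L) ≠ ⊤)
    (hN : Module.support A N = PrimeSpectrum.zeroLocus I) :
    HasGradeGE I L n ↔ ∀ i < n, Subsingleton (Ext N L i) := by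
  constructor
  · rintro ⟨rs, rfl, hI, hrs⟩
    exact ModuleCat.subsingleton_ext_of_exists_isRegular I N hN.subset L hL.lt_top rs hI
      ((isRegular_iff_isWeaklyRegular_of_mem hL hI).mpr hrs)
  · intro hExt
    obtain ⟨rs, hlen, hI, hrs⟩ :=
      ModuleCat.exists_isRegular_of_exists_subsingleton_ext I n L hL.lt_top N hN hExt
    exact ⟨rs, hlen, hI, hrs.toIsWeaklyRegular⟩

lemma subsingleton_ext_quotSMulTop [Small.{v} A] {x : A} (hx : IsSMulRegular M x)
    {N : ModuleCat.{v} A}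
    (h : ∀ i < n + 1, Subsingleton (Ext N (ModuleCat.of A M) i)) :
    ∀ i < n, Subsingleton (Ext N (ModuleCat.of A (QuotSMulTop x M)) i) := by
  intro i hi
  have hi₀ := AddCommGrpCat.isZero_of_iff_subsingleton.mpr (h i (by lia))
  have hi₁ := AddCommGrpCat.isZero_of_iff_subsingleton.mpr (h (i + 1) (by lia))
  have hexact := Ext.covariant_sequence_exact₃' N
      (IsSMulRegular.smulShortComplex_shortExact (M := ModuleCat.of A M) hx) i (i + 1) rfl
  exact AddCommGrpCat.subsingleton_of_isZero
    (hexact.isZero_of_both_zeros (hi₀.eq_zero_of_src _) (hi₁.eq_zero_of_tgt _))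

theorem HasGradeGE.quotSMulTop [Small.{v} A] [IsNoetherianRing A] [Module.Finite A M]
    (h : HasGradeGE I M (n + 1)) {x : A} (hx : IsSMulRegular M x) :
    HasGradeGE I (QuotSMulTop x M) n := by
  by_cases htop : I • (⊤ : Submodule A (QuotSMulTop x M)) = ⊤
  · exact hasGradeGE_of_smul_top_eq_top htop n
  have htop' : I • (⊤ : Submodule A M) ≠ ⊤ := fun hM ↦ htop <| by
    simpa [Submodule.map_smul'', Submodule.range_mkQ] using
      congrArg (Submodule.map (Submodule.mkQ (x • (⊤ : Submodule A M)))) hM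
  have hsupp : Module.support A (Shrink.{v} (A ⧸ I)) = PrimeSpectrum.zeroLocus I := by
    rw [(Shrink.linearEquiv A (A ⧸ I)).support_eq, Module.support_eq_zeroLocus,
      Ideal.annihilator_quotient]
  have hfin : Module.Finite A (Shrink.{v} (A ⧸ I)) :=
    Module.Finite.equiv (Shrink.linearEquiv A (A ⧸ I)).symm
  let N : ModuleCat.{v} A := ModuleCat.of A (Shrink.{v} (A ⧸ I))
  have hExt := (hasGradeGE_iff_subsingleton_ext (L := ModuleCat.of A M) (N := N) htop' hsupp).mp h
  exact (hasGradeGE_iff_subsingleton_ext (L := ModuleCat.of A (QuotSMulTop x M)) (N := N)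
    htop hsupp).mpr (subsingleton_ext_quotSMulTop hx hExt)

lemma HasGradeGE.dvd_of_forall_dvd_mul (hI : HasGradeGE I A 2) {r s : A}
    (hr : _root_.IsRegular r) (h : ∀ a ∈ I, r ∣ a * s) : r ∣ s := by
  obtain ⟨rs, hlen, hrsI, hrs⟩ := hI
  obtain ⟨a, b, rfl⟩ := List.length_eq_two.mp hlen
  rw [isWeaklyRegular_cons_iff, isWeaklyRegular_singleton_iff,
    isSMulRegular_quotient_iff_mem_of_smul_mem] at hrs
  obtain ⟨ha, hb⟩ := hrs
  obtain ⟨a', ha'⟩ := h a (hrsI a (by simp))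
  obtain ⟨b', hb'⟩ := h b (hrsI b (by simp))
  have hab : b * a' = a * b' := hr.left (by linear_combination a * hb' - b * ha')
  obtain ⟨t, -, ht : a * t = a'⟩ := hb a' ⟨b', trivial, hab.symm⟩
  exact ⟨t, ha (by linear_combination ha' - r * ht)⟩

lemma hasGradeGE_of_comap_algebraMap {B : Type*} [CommRing B] [Algebra A B]
    (hsurj : Function.Surjective (algebraMap A B)) {J : Ideal B}
    (hJ : HasGradeGE (J.comap (algebraMap A B)) B n) : HasGradeGE J B n := by
  have hmap := hJ.map_algebraMap (B := B)
  rwa [Ideal.map_comap_of_surjective _ hsurj] at hmap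

theorem hasGradeGE_of_comap_algebraMap_succ [IsNoetherianRing A] {B : Type*} [CommRing B]
    [Algebra A B] (hsurj : Function.Surjective (algebraMap A B)) {x : A}
    (hker : RingHom.ker (algebraMap A B) = Ideal.span {x}) (hx : IsSMulRegular A x) {J : Ideal B}
    (hJ : HasGradeGE (J.comap (algebraMap A B)) A (n + 1)) : HasGradeGE J B n := by
  have hrange : x • (⊤ : Submodule A A) = LinearMap.ker (Algebra.linearMap A B) := by
    rw [← Submodule.ideal_span_singleton_smul, smul_eq_mul, Ideal.mul_top, ← hker]
    rfl
  let e : QuotSMulTop x A ≃ₗ[A] B := (Submodule.quotEquivOfEq _ _ hrange).trans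
    ((Algebra.linearMap A B).quotKerEquivOfSurjective hsurj)
  exact hasGradeGE_of_comap_algebraMap hsurj ((hJ.quotSMulTop hx).congr e)

end Grade

section MvPolynomial

open RingTheory.Sequence

variable {R σ : Type*} [CommRing R]

/-- Modulo `T` the polynomial ring embeds into `(MvPolynomial σ R ⧸ Ideal.span T)[X]` by `Xᵢ ↦ X`,
and monic polynomials are regular there. -/
lemma isSMulRegular_quotient_span_aeval_X {i : σ} {u : R[X]} (hu : u.Monic)
    {T : Set (MvPolynomial σ R)} (hT : T ⊆ supported R {i}ᶜ) :
    IsSMulRegular (MvPolynomial σ R ⧸ Ideal.span T)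
      (Polynomial.aeval (X i : MvPolynomial σ R) u) := by
  classical
  let π : MvPolynomial σ R →ₐ[R] MvPolynomial σ R ⧸ Ideal.span T := Ideal.Quotient.mkₐ R _
  let ψ : MvPolynomial σ R →ₐ[R] (MvPolynomial σ R ⧸ Ideal.span T)[X] :=
    aeval fun j ↦ if j = i then Polynomial.X else Polynomial.C (π (X j))
  have hψ_supported : Set.EqOn ψ (Polynomial.CAlgHom.comp π) (supported R {i}ᶜ) := by
    rw [supported_eq_adjoin_X, AlgHom.eqOn_adjoin_iff]
    rintro _ ⟨j, hj, rfl⟩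
    simp [ψ, show j ≠ i from hj]
  have hψ_eval : ((Polynomial.aeval (π (X i))).restrictScalars R).comp ψ = π := by
    ext j
    by_cases hj : j = i <;> simp [ψ, hj]
  have hψ_u : ψ (Polynomial.aeval (X i) u) = u.map (algebraMap R _) := by
    rw [← Polynomial.aeval_algHom_apply]
    simp [ψ, Polynomial.aeval_X_left_eq_map]
  have hker : Ideal.span T = RingHom.ker ψ := by
    refine le_antisymm (Ideal.span_le.mpr fun t ht ↦ ?_) fun p hp ↦ ?_
    · have : π t = 0 := Ideal.Quotient.eq_zero_iff_mem.mpr (Ideal.subset_span ht)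
      rw [SetLike.mem_coe, RingHom.mem_ker, hψ_supported (hT ht)]
      simp [this]
    · rw [← Ideal.Quotient.eq_zero_iff_mem]
      change π p = 0
      rw [← hψ_eval, AlgHom.comp_apply, RingHom.mem_ker.mp hp, map_zero]
  rw [isSMulRegular_quotient_iff_mem_of_smul_mem]
  intro p hp
  rw [hker, RingHom.mem_ker, smul_eq_mul, map_mul, hψ_u] at hp
  rw [hker]
  exact (hu.map _).mul_right_eq_zero_iff.mp hp

lemma aeval_X_mem_supported (i : σ) (u : R[X]) :
    Polynomial.aeval (X i : MvPolynomial σ R) u ∈ supported R {i} := by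
  rw [supported_eq_adjoin_X, Set.image_singleton]
  exact Polynomial.aeval_mem_adjoin_singleton R _

lemma isWeaklyRegular_map_aeval_X {u : σ → R[X]} (hu : ∀ i, (u i).Monic) {l : List σ}
    (hl : l.Nodup) : IsWeaklyRegular (MvPolynomial σ R)
      (l.map fun i ↦ Polynomial.aeval (X i : MvPolynomial σ R) (u i)) := by
  refine ⟨fun k hk ↦ ?_⟩
  rw [List.getElem_map, smul_eq_mul, Ideal.mul_top]
  refine isSMulRegular_quotient_span_aeval_X (hu _) ?_
  rintro _ ht
  rw [Set.mem_ofPred_eq, List.mem_take_iff_getElem] at ht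
  obtain ⟨j, hj, rfl⟩ := ht
  rw [List.length_map] at hk
  rw [List.getElem_map]
  refine supported_mono ?_ (aeval_X_mem_supported _ _)
  rw [Set.singleton_subset_iff, Set.mem_compl_singleton_iff, Ne, hl.getElem_inj_iff]
  lia

variable {F : Type*} [Field F] [Finite σ]

lemma exists_monic_aeval_X_mem (I : Ideal (MvPolynomial σ F))
    [IsArtinianRing (MvPolynomial σ F ⧸ I)] (i : σ) :
    ∃ u : F[X], u.Monic ∧ Polynomial.aeval (X i) u ∈ I := by
  have : Module.Finite F (MvPolynomial σ F ⧸ I) :=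
    (Module.finite_iff_isArtinianRing F _).mpr ‹_›
  obtain ⟨u, hu, h0⟩ := Algebra.IsIntegral.isIntegral (R := F) (Ideal.Quotient.mk I (X i))
  refine ⟨u, hu, ?_⟩
  rw [← Ideal.Quotient.eq_zero_iff_mem, ← Ideal.Quotient.mkₐ_eq_mk F,
    ← Polynomial.aeval_algHom_apply]
  exact h0

lemma hasGradeGE_natCard_of_isArtinianRing_quotient (I : Ideal (MvPolynomial σ F))
    [IsArtinianRing (MvPolynomial σ F ⧸ I)] :
    HasGradeGE I (MvPolynomial σ F) (Nat.card σ) := by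
  cases nonempty_fintype σ
  choose u hu huI using exists_monic_aeval_X_mem I
  refine ⟨Finset.univ.toList.map fun i ↦ Polynomial.aeval (X i) (u i), ?_, ?_,
    isWeaklyRegular_map_aeval_X hu (Finset.nodup_toList _)⟩
  · simp
  · simpa using huI

end MvPolynomial

section KaehlerDifferential

open KaehlerDifferential

variable {K A B ι : Type*} [CommRing K] [CommRing A] [CommRing B] [Algebra K A] [Algebra K B]
  [Algebra A B] [IsScalarTower K A B]

lemma torsion_eq_bot_of_isTorsionFree {M : Type*} [AddCommGroup M] [Module B M]
    [Module.IsTorsionFree B M] : Submodule.torsion B M = ⊥ := by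
  rw [eq_bot_iff]
  rintro m ⟨⟨r, hr⟩, hm : r • m = 0⟩
  exact (isRegular_iff_mem_nonZeroDivisors.mpr hr).isSMulRegular.right_eq_zero_of_smul hm

theorem isTorsionFree_quotient_span_singleton {M : Type*} [AddCommGroup M] [Module B M]
    (b : Module.Basis ι B M) {v : M}
    (hv : HasGradeGE (Ideal.span (Set.range (b.repr v))) B 2) :
    Module.IsTorsionFree B (M ⧸ B ∙ v) where
  isSMulRegular r hr := by
    have : Module.IsTorsionFree B M := b.isTorsionFree
    rw [isSMulRegular_quotient_iff_mem_of_smul_mem]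
    intro w hw
    obtain ⟨s, hs⟩ := Submodule.mem_span_singleton.mp hw
    have hcoord (i : ι) : b.repr v i * s = r * b.repr w i := by
      simpa [mul_comm] using DFunLike.congr_fun (congrArg b.repr hs) i
    have hle : Ideal.span (Set.range (b.repr v)) ≤ (Ideal.span {r}).colon {s} := by
      rw [Ideal.span_le]
      rintro _ ⟨i, rfl⟩
      rw [SetLike.mem_coe, Submodule.mem_colon_singleton, smul_eq_mul, Ideal.mem_span_singleton]
      exact ⟨_, hcoord i⟩
    obtain ⟨t, rfl⟩ := hv.dvd_of_forall_dvd_mul hr fun a ha ↦ by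
      simpa [Submodule.mem_colon_singleton, Ideal.mem_span_singleton] using hle ha
    rw [mul_smul] at hs
    exact Submodule.mem_span_singleton.mpr ⟨t, hr.isSMulRegular hs⟩

lemma ker_mapBaseChange_eq_span_singleton (hsurj : Function.Surjective (algebraMap A B)) {f : A}
    (hker : RingHom.ker (algebraMap A B) = Ideal.span {f}) :
    LinearMap.ker (mapBaseChange K A B) = B ∙ (1 ⊗ₜ[A] D K A f) := by
  have hf : algebraMap A B f = 0 := by
    rw [← RingHom.mem_ker, hker]
    exact Ideal.mem_span_singleton_self f
  refine le_antisymm (fun w hw ↦ ?_) ?_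
  · obtain ⟨x, rfl⟩ := (exact_kerCotangentToTensor_mapBaseChange K A B hsurj w).mp hw
    obtain ⟨⟨x, hx⟩, rfl⟩ := Ideal.toCotangent_surjective _ x
    obtain ⟨q, rfl⟩ := Ideal.mem_span_singleton'.mp (hker ▸ hx)
    refine Submodule.mem_span_singleton.mpr ⟨algebraMap A B q, ?_⟩
    simp [kerCotangentToTensor_toCotangent, TensorProduct.tmul_add, TensorProduct.tmul_smul,
      TensorProduct.smul_tmul', Algebra.smul_def, hf]
  · rw [Submodule.span_singleton_le_iff_mem]
    simp [hf]

theorem isTorsionFree_kaehlerDifferential (hsurj : Function.Surjective (algebraMap A B)) {f : A}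
    (hker : RingHom.ker (algebraMap A B) = Ideal.span {f}) (b : Module.Basis ι A (Ω[A⁄K]))
    (hf : HasGradeGE (Ideal.span (Set.range fun i ↦ algebraMap A B (b.repr (D K A f) i))) B 2) :
    Module.IsTorsionFree B (Ω[B⁄K]) := by
  have hrepr : ⇑((b.baseChange B).repr (1 ⊗ₜ D K A f)) =
      fun i ↦ algebraMap A B (b.repr (D K A f) i) := by
    ext i
    simp [Algebra.algebraMap_eq_smul_one]
  have hquot := isTorsionFree_quotient_span_singleton (b.baseChange B) (hrepr ▸ hf)
  rw [← ker_mapBaseChange_eq_span_singleton hsurj hker] at hquot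
  let ε := (mapBaseChange K A B).quotKerEquivOfSurjective (mapBaseChange_surjective K A B hsurj)
  exact ε.symm.injective.moduleIsTorsionFree _ ε.symm.map_smul
end KaehlerDifferential

section Hypersurface

lemma isArtinianRing_quotient_comap {A B : Type*} [CommRing A] [CommRing B] {φ : A →+* B}
    (hφ : Function.Surjective φ) (J : Ideal B) [IsArtinianRing (B ⧸ J)] :
    IsArtinianRing (A ⧸ J.comap φ) :=
  (RingEquiv.ofBijective (Ideal.quotientMap J φ le_rfl)
    ⟨Ideal.quotientMap_injective, Ideal.quotientMap_surjective hφ⟩).symm.isArtinianRing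

variable {F σ R : Type*} [Field F] [Finite σ] [CommRing R] {f : MvPolynomial σ F}

theorem hasGradeGE_of_isArtinianRing_quotient [Algebra (MvPolynomial σ F) R]
    (hsurj : Function.Surjective (algebraMap (MvPolynomial σ F) R))
    (hker : RingHom.ker (algebraMap (MvPolynomial σ F) R) = Ideal.span {f})
    (J : Ideal R) [IsArtinianRing (R ⧸ J)] {n : ℕ} (hn : n < Nat.card σ) : HasGradeGE J R n := by
  have := isArtinianRing_quotient_comap hsurj J
  have hgrade := hasGradeGE_natCard_of_isArtinianRing_quotient
    (J.comap (algebraMap (MvPolynomial σ F) R))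
  by_cases hf : f = 0
  · have hinj : Function.Injective (algebraMap (MvPolynomial σ F) R) := by
      rw [RingHom.injective_iff_ker_eq_bot, hker, hf, Ideal.span_singleton_eq_bot]
    let e := LinearEquiv.ofBijective (Algebra.linearMap (MvPolynomial σ F) R) ⟨hinj, hsurj⟩
    exact hasGradeGE_of_comap_algebraMap hsurj ((hgrade.of_le hn.le).congr e)
  · exact hasGradeGE_of_comap_algebraMap_succ hsurj hker (IsRegular.of_ne_zero hf).isSMulRegular
      (hgrade.of_le hn)

lemma range_fin_three {α : Type*} (g : Fin 3 → α) : Set.range g = {g 0, g 1, g 2} := by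
  ext
  simp [Fin.exists_fin_succ, eq_comm]

theorem hypersurface_R_omega1_torsionFree_general (hσ : 2 < Nat.card σ) [Algebra F R]
    (e : (MvPolynomial σ F ⧸ Ideal.span {f}) ≃ₐ[F] R)
    (hisolated : IsFiniteLength R
      (R ⧸ Ideal.span (Set.range fun i ↦ e (Ideal.Quotient.mk _ (pderiv i f))))) :
    Submodule.torsion R R = ⊥ ∧ Submodule.torsion R (Ω[R⁄F]) = ⊥ := by
  let φ : MvPolynomial σ F →ₐ[F] R := e.toAlgHom.comp (Ideal.Quotient.mkₐ F _)
  let _ : Algebra (MvPolynomial σ F) R := φ.toAlgebra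
  have : IsScalarTower F (MvPolynomial σ F) R := .of_algebraMap_eq fun c ↦ (φ.commutes c).symm
  have hφ : Function.Surjective φ := e.surjective.comp Ideal.Quotient.mk_surjective
  have hker : RingHom.ker φ = Ideal.span {f} := by
    ext p
    simp [φ, RingHom.mem_ker, Ideal.Quotient.eq_zero_iff_mem]
  let J : Ideal R := Ideal.span (Set.range fun i ↦ φ (pderiv i f))
  have hArt : IsArtinian R (R ⧸ J) := (isFiniteLength_iff_isNoetherian_isArtinian.mp hisolated).2
  have : IsArtinianRing (R ⧸ J) := isArtinian_of_tower R hArt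
  have : Module.IsTorsionFree R (Ω[R⁄F]) :=
    isTorsionFree_kaehlerDifferential hφ hker (KaehlerDifferential.mvPolynomialBasis F σ) <| by
      simp only [KaehlerDifferential.mvPolynomialBasis_repr_apply]
      exact hasGradeGE_of_isArtinianRing_quotient hφ hker J hσ
  exact ⟨torsion_eq_bot_of_isTorsionFree, torsion_eq_bot_of_isTorsionFree⟩

end Hypersurface

/-- Let `R = F[x,y,z]/(f)` be a 2-dimensional isolated hypersurface singularity over a
field `F` of characteristic zero (`f` prime, and the Tjurina algebra of finite length).
Then the `R`-modules `R` and `Ω¹_{R/F}` are torsion-free. -/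
theorem hypersurface_R_omega1_torsionFree (F : Type) [Field F] [CharZero F]
    (f : MvPolynomial (Fin 3) F) (hf : Prime f)
    (R : Type) [CommRing R] (e : (MvPolynomial (Fin 3) F ⧸ Ideal.span {f}) ≃+* R)
    [Algebra F R] (halg : ∀ c : F, algebraMap F R c = e (algebraMap F _ c))
    (hisolated : IsFiniteLength R
      (R ⧸ Ideal.span {e (Ideal.Quotient.mk _ (pderiv 0 f)),
        e (Ideal.Quotient.mk _ (pderiv 1 f)), e (Ideal.Quotient.mk _ (pderiv 2 f))})) :
    Submodule.torsion R R = ⊥ ∧ Submodule.torsion R (Ω[R⁄F]) = ⊥ := by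
  exact hypersurface_R_omega1_torsionFree_general (by simp)
    (AlgEquiv.ofRingEquiv (f := e) fun c ↦ (halg c).symm) (by rwa [range_fin_three])
end
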